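/- Let a_1 ≥ a_2 ≥ … ≥ a_m be any non-increasing sequence of non-negative integers and let K be a field. Then there exist an integer n and a squarefree monomial ideal I ⊆ S = K[x_1,…,x_n] such that ν(I) = m and g_I(k) = a_k for all k = 1,…,m. -/

import Mathlib

open MvPolynomial

/-- The squarefree monomial `∏ i ∈ F, xᵢ`. -/
noncomputable def sqMon (K : Type) [Field K] {σ : Type} (F : Finset σ) :
    MvPolynomial σ K := ∏ i ∈ F, X i

/-- `I` is a squarefree monomial ideal if it is generated by squarefree monomials. -/
def IsSqfreeMonomialIdeal (K : Type) [Field K] {σ : Type}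
    (I : Ideal (MvPolynomial σ K)) : Prop :=
  ∃ 𝒢 : Set (Finset σ), I = Ideal.span ((sqMon K) '' 𝒢)

/-- The `k`-th squarefree power `I^[k]`: the ideal generated by all squarefree
monomials belonging to `I^k`. -/
noncomputable def sqfreePower (K : Type) [Field K] {σ : Type}
    (I : Ideal (MvPolynomial σ K)) (k : ℕ) : Ideal (MvPolynomial σ K) :=
  Ideal.span {m | ∃ F : Finset σ, m = sqMon K F ∧ m ∈ I ^ k}

/-- The monomial grade `ν(I)`: the largest `k` with `I^[k] ≠ (0)`. -/
noncomputable def monGrade (K : Type) [Field K] {σ : Type}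
    (I : Ideal (MvPolynomial σ K)) : ℕ :=
  sSup {k | sqfreePower K I k ≠ ⊥}

/-- The initial degree of a squarefree monomial ideal: the least degree of a
(squarefree) monomial belonging to it. -/
noncomputable def indeg (K : Type) [Field K] {σ : Type}
    (I : Ideal (MvPolynomial σ K)) : ℕ :=
  sInf {d | ∃ F : Finset σ, F.card = d ∧ sqMon K F ∈ I}

/-- The depth of `S/I` over the polynomial ring `S`: the longest length of a
regular sequence on `S/I` consisting of elements of the irrelevant maximal ideal. -/
noncomputable def polyDepth (K : Type) [Field K] {σ : Type}
    (I : Ideal (MvPolynomial σ K)) : ℕ :=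
  sSup {k | ∃ rs : List (MvPolynomial σ K), rs.length = k ∧
    (∀ r ∈ rs, r ∈ Ideal.span (Set.range (X : σ → MvPolynomial σ K))) ∧
    RingTheory.Sequence.IsRegular (MvPolynomial σ K ⧸ I) rs}

/-- The normalized depth function `g_I(k) = depth(S/I^[k]) - (indeg(I^[k]) - 1)`. -/
noncomputable def nDepth (K : Type) [Field K] {σ : Type}
    (I : Ideal (MvPolynomial σ K)) (k : ℕ) : ℤ :=
  (polyDepth K (sqfreePower K I k) : ℤ) - ((indeg K (sqfreePower K I k) : ℤ) - 1)

open RingTheory.Sequence Function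

theorem isWeaklyRegular_of_exact {R : Type*} [CommRing R] {rs : List R} :
    ∀ {M₁ M₂ M₃ : Type*} [AddCommGroup M₁] [Module R M₁] [AddCommGroup M₂] [Module R M₂]
    [AddCommGroup M₃] [Module R M₃] {f : M₁ →ₗ[R] M₂} {g : M₂ →ₗ[R] M₃},
    Injective f → Exact f g → Surjective g →
    IsWeaklyRegular M₁ rs → IsWeaklyRegular M₃ rs → IsWeaklyRegular M₂ rs := by
  induction rs with
  | nil => intros; simp
  | cons r rs ih =>
    intro M₁ M₂ M₃ _ _ _ _ _ _ f g hf hfg hg h₁ h₃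
    rw [isWeaklyRegular_cons_iff] at h₁ h₃ ⊢
    refine ⟨isSMulRegular_of_range_eq_ker hf hfg.linearMap_ker_eq.symm h₁.1 h₃.1,
      ih (f := QuotSMulTop.map r f) (g := QuotSMulTop.map r g) ?_
        (QuotSMulTop.map_exact r hfg hg) (QuotSMulTop.map_surjective r hg) h₁.2 h₃.2⟩
    have h0 : Exact (0 : PUnit →ₗ[R] M₁) f := by
      rw [LinearMap.exact_zero_iff_injective]; exact hf
    have := QuotSMulTop.map_first_exact_on_four_term_exact_of_isSMulRegular_last
      (r := r) h0 hfg h₃.1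
    rw [map_zero] at this
    rwa [LinearMap.exact_zero_iff_injective] at this

/-- If a prime `P ⊆ 𝔪` is the annihilator of an element of `M` and `x ∈ 𝔪` is `M`-regular, then
some prime `P < P' ⊆ 𝔪` is the annihilator of an element of `M / xM`. -/
theorem exists_prime_annihilator_quotSMulTop {R M : Type*} [CommRing R] [IsNoetherianRing R]
    [AddCommGroup M] [Module R M] [IsNoetherian R M] {𝔪 P : Ideal R} [h𝔪 : 𝔪.IsPrime]
    (hP𝔪 : P ≤ 𝔪) {n : M} (hn : ∀ r : R, r • n = 0 ↔ r ∈ P) {x : R} (hx : x ∈ 𝔪)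
    (hreg : IsSMulRegular M x) :
    ∃ P' : Ideal R, P'.IsPrime ∧ P < P' ∧ P' ≤ 𝔪 ∧
      ∃ z : QuotSMulTop x M, ∀ r : R, r • z = 0 ↔ r ∈ P' := by
  have hmul : ∀ {a b : R}, a * b ∈ 𝔪 → b ∉ 𝔪 → a ∈ 𝔪 := fun h hb =>
    (h𝔪.mem_or_mem h).resolve_right hb
  have hxz : ∀ v : M, x • v = 0 → v = 0 := fun v hv => hreg.right_eq_zero_of_smul hv
  -- an element killed by `P` that stays nonzero, locally at `𝔪`, modulo `x`
  obtain ⟨y, hyP, hy⟩ : ∃ y : M, (∀ p ∈ P, p • y = 0) ∧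
      ∀ s w, s • y = x • w → s ∈ 𝔪 := by
    let T : M → Submodule R M := fun y =>
      { carrier := {w | ∃ s, s ∉ 𝔪 ∧ s • w ∈ Submodule.span R {y}}
        add_mem' := by
          rintro a b ⟨s, hs, ha⟩ ⟨t, ht, hb⟩
          refine ⟨s * t, fun h => hs (hmul h ht), ?_⟩
          rw [smul_add, mul_comm s t, mul_smul, mul_comm t s, mul_smul]
          exact add_mem (Submodule.smul_mem _ _ ha) (Submodule.smul_mem _ _ hb)
        zero_mem' := ⟨1, fun h => h𝔪.ne_top ((Ideal.eq_top_iff_one _).mpr h), by simp⟩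
        smul_mem' := by
          rintro c a ⟨s, hs, ha⟩
          exact ⟨s, hs, by rw [smul_comm]; exact Submodule.smul_mem _ _ ha⟩ }
    let A : Set M := {y | (∀ p ∈ P, p • y = 0) ∧ ∀ r, r • y = 0 → r ∈ 𝔪}
    have hnA : n ∈ A := ⟨fun p hp => (hn p).mpr hp, fun r hr => hP𝔪 ((hn r).mp hr)⟩
    obtain ⟨_, ⟨y, hyA, rfl⟩, hmax⟩ := set_has_maximal_iff_noetherian.mpr
      (inferInstance : IsNoetherian R M) (T '' A) ⟨_, n, hnA, rfl⟩
    refine ⟨y, hyA.1, fun s w hsw => by_contra fun hs => ?_⟩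
    have hwA : w ∈ A := by
      refine ⟨fun p hp => hxz _ ?_, fun r hr => ?_⟩
      · rw [smul_comm, ← hsw, smul_comm, hyA.1 p hp, smul_zero]
      · refine hmul (hyA.2 (r * s) ?_) hs
        rw [mul_smul, hsw, smul_comm, hr, smul_zero]
    have hle : T y ≤ T w := by
      rintro v ⟨t, ht, hv⟩
      obtain ⟨c, hc⟩ := Submodule.mem_span_singleton.mp hv
      refine ⟨s * t, fun h => hs (hmul h ht), Submodule.mem_span_singleton.mpr ⟨c * x, ?_⟩⟩
      rw [mul_smul, ← hsw, mul_smul s t, ← hc, smul_comm]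
    have hwT : w ∈ T y := by
      have : w ∈ T w := ⟨1, fun h => h𝔪.ne_top ((Ideal.eq_top_iff_one _).mpr h), by
        simp [Submodule.mem_span_singleton_self]⟩
      rwa [← eq_of_le_of_not_lt hle (hmax _ ⟨w, hwA, rfl⟩)] at this
    obtain ⟨t, ht, hw⟩ := hwT
    obtain ⟨c, hc⟩ := Submodule.mem_span_singleton.mp hw
    have h0 : (s * t - x * c) • y = 0 := by
      rw [sub_smul, mul_comm s t, mul_smul, hsw, mul_smul, hc, smul_comm, sub_self]
    have hst := add_mem (hyA.2 _ h0) (𝔪.mul_mem_right c hx)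
    rw [sub_add_cancel] at hst
    exact hs (hmul hst ht)
  let N := QuotSMulTop x M
  let ann : N → Ideal R := fun z => LinearMap.ker (LinearMap.toSpanSingleton R N z)
  have mem_ann : ∀ z r, r ∈ ann z ↔ r • z = 0 := fun z r => by simp [ann]
  let B : Set N := {z | P ≤ ann z ∧ x ∈ ann z ∧ ann z ≤ 𝔪}
  have hyB : (Submodule.Quotient.mk y : N) ∈ B := by
    refine ⟨fun p hp => ?_, ?_, fun r hr => ?_⟩
    · rw [mem_ann, ← Submodule.Quotient.mk_smul, hyP p hp, Submodule.Quotient.mk_zero]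
    · rw [mem_ann, ← Submodule.Quotient.mk_smul, Submodule.Quotient.mk_eq_zero]
      exact Submodule.smul_mem_pointwise_smul _ _ _ trivial
    · rw [mem_ann, ← Submodule.Quotient.mk_smul, Submodule.Quotient.mk_eq_zero] at hr
      obtain ⟨w, -, hw⟩ := hr
      exact hy r w hw.symm
  obtain ⟨_, ⟨z, hzB, rfl⟩, hmax⟩ := set_has_maximal_iff_noetherian.mpr
    (inferInstance : IsNoetherian R R) (ann '' B) ⟨_, _, hyB, rfl⟩
  have hmono : ∀ c : R, ann z ≤ ann (c • z) := fun c r hr => by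
    rw [mem_ann] at hr ⊢
    rw [smul_comm, hr, smul_zero]
  have hmaxc : ∀ c : R, ann (c • z) ≤ 𝔪 → ann (c • z) = ann z := fun c hc =>
    (eq_of_le_of_not_lt (hmono c)
      (hmax _ ⟨_, ⟨hzB.1.trans (hmono c), hmono c hzB.2.1, hc⟩, rfl⟩)).symm
  refine ⟨ann z, ⟨fun h => h𝔪.ne_top (top_le_iff.mp (h ▸ hzB.2.2)), fun {a b} hab => ?_⟩,
    lt_of_le_of_ne hzB.1 fun h => ?_, hzB.2.2, z, fun r => (mem_ann z r).symm⟩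
  · by_cases hb : ann (b • z) ≤ 𝔪
    · left
      rw [← hmaxc b hb, mem_ann, ← mul_smul]
      exact (mem_ann _ _).mp hab
    · right
      obtain ⟨s, hsb, hs⟩ := SetLike.not_le_iff_exists.mp hb
      rw [← hmaxc s fun r hr => ?_, mem_ann, smul_comm]
      · exact (mem_ann _ _).mp hsb
      · rw [mem_ann, ← mul_smul] at hr
        exact hmul (hzB.2.2 ((mem_ann _ _).mpr hr)) hs
  · have hxP : x ∈ P := h ▸ hzB.2.1
    have hn0 := hxz n ((hn x).mpr hxP)
    exact h𝔪.ne_top ((Ideal.eq_top_iff_one _).mpr (hP𝔪 ((hn 1).mp (by simp [hn0]))))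

/-- A weakly regular sequence in `𝔪` is no longer than any chain of primes above an associated
prime contained in `𝔪`. -/
theorem length_le_coheight_of_isWeaklyRegular {R : Type*} [CommRing R] [IsNoetherianRing R]
    {𝔪 : Ideal R} [𝔪.IsPrime] {rs : List R} (hrs : ∀ r ∈ rs, r ∈ 𝔪) :
    ∀ {M : Type*} [AddCommGroup M] [Module R M] [IsNoetherian R M] (P : PrimeSpectrum R)
    (_ : P.asIdeal ≤ 𝔪) (n : M) (_ : ∀ r : R, r • n = 0 ↔ r ∈ P.asIdeal)
    (_ : IsWeaklyRegular M rs), (rs.length : ℕ∞) ≤ Order.coheight P := by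
  induction rs with
  | nil => intros; simp
  | cons x rs ih =>
    intro M _ _ _ P hP n hn h
    rw [isWeaklyRegular_cons_iff] at h
    obtain ⟨P', hP', hlt, hle, z, hz⟩ :=
      exists_prime_annihilator_quotSMulTop hP hn (hrs x (by simp)) h.1
    have h1 := ih (fun r hr => hrs r (by simp [hr])) ⟨P', hP'⟩ hle z hz h.2
    have h2 : P < ⟨P', hP'⟩ := hlt
    calc ((x :: rs).length : ℕ∞) = rs.length + 1 := by simp
      _ ≤ Order.coheight (⟨P', hP'⟩ : PrimeSpectrum R) + 1 := by gcongr
      _ ≤ _ := Order.coheight_add_one_le h2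

/-- The complete homogeneous symmetric polynomial of degree `i` in the entries of a list. -/
def completeHomog {R : Type*} [CommRing R] : List R → ℕ → R
  | [], 0 => 1
  | [], _ + 1 => 0
  | _ :: _, 0 => 1
  | x :: l, i + 1 => completeHomog l (i + 1) + x * completeHomog (x :: l) i
termination_by l i => (l.length, i)

@[simp]
theorem completeHomog_zero {R : Type*} [CommRing R] (l : List R) : completeHomog l 0 = 1 := by
  cases l <;> simp [completeHomog]

theorem completeHomog_cons_succ {R : Type*} [CommRing R] (x : R) (l : List R) (i : ℕ) :
    completeHomog (x :: l) (i + 1) = completeHomog l (i + 1) + x * completeHomog (x :: l) i := by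
  rw [completeHomog]

theorem map_completeHomog {R S : Type*} [CommRing R] [CommRing S] (φ : R →+* S) (l : List R)
    (i : ℕ) : φ (completeHomog l i) = completeHomog (l.map φ) i := by
  induction l generalizing i with
  | nil => cases i <;> simp [completeHomog]
  | cons x l ih =>
    induction i with
    | zero => simp
    | succ i ih' => rw [completeHomog_cons_succ, map_add, map_mul, ih, ih', List.map_cons,
        completeHomog_cons_succ]

theorem completeHomog_zero_cons {R : Type*} [CommRing R] (l : List R) (i : ℕ) :
    completeHomog (0 :: l) i = completeHomog l i := by
  cases i <;> simp [completeHomog_cons_succ]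

theorem completeHomog_cons_congr {R : Type*} [CommRing R] (x : R) {l l' : List R}
    (h : ∀ i, completeHomog l i = completeHomog l' i) (i : ℕ) :
    completeHomog (x :: l) i = completeHomog (x :: l') i := by
  induction i with
  | zero => simp
  | succ i ih => rw [completeHomog_cons_succ, completeHomog_cons_succ, h, ih]

theorem completeHomog_map_filter {R α : Type*} [CommRing R] (f : α → R) (p : α → Prop)
    [DecidablePred p] (hp : ∀ a, ¬ p a → f a = 0) (l : List α) (i : ℕ) :
    completeHomog ((l.filter p).map f) i = completeHomog (l.map f) i := by
  induction l generalizing i with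
  | nil => rfl
  | cons a l ih =>
    by_cases ha : p a
    · simpa [ha] using completeHomog_cons_congr (f a) ih i
    · simp [ha, hp a ha, completeHomog_zero_cons, ih]

theorem completeHomog_mem {R : Type*} [CommRing R] {I : Ideal R} {l : List R}
    (hl : ∀ x ∈ l, x ∈ I) (i : ℕ) : completeHomog l (i + 1) ∈ I := by
  induction l generalizing i with
  | nil => simp [completeHomog]
  | cons x l ih =>
    rw [completeHomog_cons_succ]
    exact add_mem (ih (fun y hy => hl y (by simp [hy])) i) (I.mul_mem_right _ (hl x (by simp)))

theorem monic_completeHomog {R : Type*} [CommRing R] [Nontrivial R] (l : List R) (i : ℕ) :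
    (completeHomog (Polynomial.X :: l.map Polynomial.C) i).Monic := by
  induction i with
  | zero => simp
  | succ i ih =>
    rw [completeHomog_cons_succ, ← map_completeHomog]
    refine (Polynomial.monic_X.mul ih).add_of_right (Polynomial.degree_C_le.trans_lt ?_)
    rw [Polynomial.degree_eq_natDegree (Polynomial.monic_X.mul ih).ne_zero,
      Polynomial.monic_X.natDegree_mul ih]
    simp only [Polynomial.natDegree_X]
    exact_mod_cast (by omega : 0 < 1 + _)

/-- Weak regularity only depends on the entries of a sequence modulo the previous ones. -/
theorem isWeaklyRegular_of_eq_add_mul {R : Type*} [CommRing R] {u v : ℕ → R} {c : R}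
    (h : ∀ i, u (i + 1) = v (i + 1) + c * u i) (l : ℕ) :
    ∀ {M : Type*} [AddCommGroup M] [Module R M] (s : ℕ),
      IsWeaklyRegular M (u s :: (List.range' (s + 1) l).map v) →
      IsWeaklyRegular M ((List.range' s (l + 1)).map u) := by
  induction l with
  | zero => intro M _ _ s hs; simpa using hs
  | succ l ih =>
    intro M _ _ s hs
    rw [List.range'_succ, List.map_cons, isWeaklyRegular_cons_iff] at hs ⊢
    refine ⟨hs.1, ih (s + 1) ?_⟩
    refine (AddEquiv.isWeaklyRegular_congr (e := AddEquiv.refl (QuotSMulTop (u s) M))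
      (.cons ?_ (List.forall₂_same.mpr fun _ _ _ => rfl))).mp hs.2
    intro z
    obtain ⟨z, rfl⟩ := Submodule.mkQ_surjective _ z
    rw [AddEquiv.refl_apply, AddEquiv.refl_apply, h, add_smul, left_eq_add, mul_comm, mul_smul,
      ← map_smul, ← map_smul, Submodule.mkQ_apply, Submodule.Quotient.mk_eq_zero]
    exact Submodule.smul_mem_pointwise_smul _ _ _ trivial

open Pointwise in
theorem isWeaklyRegular_completeHomog_polynomial {R : Type*} [CommRing R] [Nontrivial R]
    (L : List R) (s l : ℕ)
    (h : IsWeaklyRegular R ((List.range' (s + 1) l).map (completeHomog L))) :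
    IsWeaklyRegular (Polynomial R) ((List.range' s (l + 1)).map
      (completeHomog (Polynomial.X :: L.map Polynomial.C))) := by
  set H := completeHomog (Polynomial.X :: L.map Polynomial.C) with hH
  refine isWeaklyRegular_of_eq_add_mul (v := fun i => Polynomial.C (completeHomog L i))
    (c := Polynomial.X) (fun i => ?_) l s ?_
  · rw [hH, completeHomog_cons_succ, map_completeHomog]
  have hm : (H s).Monic := monic_completeHomog L s
  rw [isWeaklyRegular_cons_iff]
  refine ⟨hm.isRegular.left.isSMulRegular, ?_⟩
  have := hm.free_adjoinRoot
  have h1 := h.of_flat (S := AdjoinRoot (H s))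
  have hspan : Ideal.span {H s} = H s • (⊤ : Submodule (Polynomial R) (Polynomial R)) := by
    rw [← Submodule.ideal_span_singleton_smul, smul_eq_mul, Ideal.mul_top]
  let e : AdjoinRoot (H s) ≃+ QuotSMulTop (H s) (Polynomial R) :=
    (Submodule.quotEquivOfEq (Ideal.span {H s}) _ hspan).toAddEquiv
  refine (AddEquiv.isWeaklyRegular_congr (e := e) ?_).mp h1
  rw [List.map_map, List.forall₂_map_left_iff, List.forall₂_map_right_iff, List.forall₂_same]
  intro i _ x
  obtain ⟨x, rfl⟩ := AdjoinRoot.mk_surjective x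
  rfl

theorem isWeaklyRegular_completeHomog_fin {K : Type*} [Field K] (r : ℕ) : ∀ (s l : ℕ), l ≤ r →
    IsWeaklyRegular (MvPolynomial (Fin r) K)
      ((List.range' s l).map (completeHomog ((List.finRange r).map
        (X : _ → MvPolynomial (Fin r) K)))) := by
  induction r with
  | zero => intro s l hl; simp [Nat.le_zero.mp hl]
  | succ r ih =>
    rintro s (_ | l) hl
    · simp
    have h1 := isWeaklyRegular_completeHomog_polynomial
      ((List.finRange r).map (X : _ → MvPolynomial (Fin r) K)) s l (ih (s + 1) l (by omega))
    let e := finSuccEquiv K r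
    refine (AddEquiv.isWeaklyRegular_congr (e := (e : _ ≃+ _)) ?_).mpr h1
    rw [List.forall₂_map_left_iff, List.forall₂_map_right_iff, List.forall₂_same]
    intro i _ x
    have := map_completeHomog e.toRingEquiv.toRingHom
      ((List.finRange (r + 1)).map (X : _ → MvPolynomial (Fin (r + 1)) K)) i
    rw [smul_eq_mul, smul_eq_mul]
    change e _ = _ * e _
    rw [map_mul]
    congr 1
    refine this.trans ?_
    simp [e, List.finRange_succ, finSuccEquiv_X_zero, finSuccEquiv_X_succ, Function.comp_def]

/-- The ideal generated by the squarefree monomials whose support satisfies `N`. -/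
noncomputable def sqIdeal (K : Type) [Field K] {σ : Type} (N : Finset σ → Prop) :
    Ideal (MvPolynomial σ K) := Ideal.span (sqMon K '' {F | N F})

section SqIdeal

variable {K : Type} [Field K] {σ : Type} {N : Finset σ → Prop}

theorem sqMon_eq_monomial (F : Finset σ) :
    sqMon K F = monomial (∑ i ∈ F, Finsupp.single i 1) 1 := by
  classical
  rw [sqMon]
  induction F using Finset.induction_on with
  | empty => simp
  | insert a F ha ih =>
    rw [Finset.prod_insert ha, Finset.sum_insert ha, ih, X, monomial_mul, one_mul]

theorem sum_single_apply [DecidableEq σ] (F : Finset σ) (i : σ) :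
    (∑ j ∈ F, Finsupp.single j 1 : σ →₀ ℕ) i = if i ∈ F then 1 else 0 := by
  simp [Finsupp.finsetSum_apply, Finsupp.single_apply]

theorem sum_single_le_iff (F : Finset σ) (e : σ →₀ ℕ) :
    (∑ j ∈ F, Finsupp.single j 1 : σ →₀ ℕ) ≤ e ↔ F ⊆ e.support := by
  classical
  rw [Finsupp.le_def]
  refine ⟨fun h i hi => ?_, fun h i => ?_⟩
  · have := h i
    rw [sum_single_apply, if_pos hi] at this
    exact Finsupp.mem_support_iff.mpr (by omega)
  · rw [sum_single_apply]
    split_ifs with hi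
    · exact Nat.one_le_iff_ne_zero.mpr (Finsupp.mem_support_iff.mp (h hi))
    · exact Nat.zero_le _

theorem mem_sqIdeal_iff (hN : ∀ F G, F ⊆ G → N F → N G) (p : MvPolynomial σ K) :
    p ∈ sqIdeal K N ↔ ∀ e ∈ p.support, N e.support := by
  have : sqMon K '' {F | N F} = (fun e => monomial e (1 : K)) ''
      ((fun F => ∑ i ∈ F, Finsupp.single i 1) '' {F | N F}) := by
    rw [Set.image_image]
    exact Set.image_congr fun F _ => sqMon_eq_monomial F
  rw [sqIdeal, this, mem_ideal_span_monomial_image]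
  refine forall₂_congr fun e _ => ⟨?_, fun h => ⟨_, ⟨_, h, rfl⟩, (sum_single_le_iff _ _).mpr le_rfl⟩⟩
  rintro ⟨_, ⟨F, hF, rfl⟩, hle⟩
  exact hN _ _ ((sum_single_le_iff _ _).mp hle) hF

theorem sqMon_mem_sqIdeal {F : Finset σ} (hF : N F) : sqMon K F ∈ sqIdeal K N :=
  Ideal.subset_span ⟨F, hF, rfl⟩

theorem sqIdeal_le_sup_span (v : σ) :
    sqIdeal K (fun F => N F ∨ v ∈ F) ≤ sqIdeal K N ⊔ Ideal.span {X v} := by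
  rw [sqIdeal, Ideal.span_le]
  rintro _ ⟨F, hF | hF, rfl⟩
  · exact Ideal.mem_sup_left (sqMon_mem_sqIdeal hF)
  · exact Ideal.mem_sup_right (Ideal.mem_span_singleton.mpr (Finset.dvd_prod_of_mem _ hF))

theorem sqIdeal_eq_top (h : N ∅) : sqIdeal K N = ⊤ :=
  (Ideal.eq_top_iff_one _).mpr (by simpa [sqMon] using sqMon_mem_sqIdeal (K := K) h)

variable [DecidableEq σ]

theorem support_sum_single (F : Finset σ) :
    (∑ j ∈ F, Finsupp.single j 1 : σ →₀ ℕ).support = F := by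
  ext i
  simp [sum_single_apply]

theorem sqMon_mem_sqIdeal_iff (hN : ∀ F G, F ⊆ G → N F → N G) (F : Finset σ) :
    sqMon K F ∈ sqIdeal K N ↔ N F := by
  classical
  rw [mem_sqIdeal_iff hN, sqMon_eq_monomial, support_monomial, if_neg one_ne_zero]
  simp [support_sum_single]

theorem X_mul_mem_sqIdeal_iff (hN : ∀ F G, F ⊆ G → N F → N G) (v : σ) (p : MvPolynomial σ K) :
    X v * p ∈ sqIdeal K N ↔ p ∈ sqIdeal K fun F => N (insert v F) := by
  rw [mem_sqIdeal_iff hN, mem_sqIdeal_iff fun F G h => hN _ _ (Finset.insert_subset_insert v h),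
    support_X_mul]
  simp only [Finset.mem_map, addLeftEmbedding_apply, forall_exists_index, and_imp,
    forall_apply_eq_imp_iff₂]
  refine forall₂_congr fun e _ => iff_of_eq (congrArg N ?_)
  ext i
  by_cases h : i = v <;> simp [h, eq_comm]

theorem mul_sqMon_mem_sqIdeal_iff (hN : ∀ F G, F ⊆ G → N F → N G) (F : Finset σ)
    (p : MvPolynomial σ K) :
    p * sqMon K F ∈ sqIdeal K N ↔ p ∈ sqIdeal K fun G => N (G ∪ F) := by
  induction F using Finset.induction_on generalizing N with
  | empty => simp [sqMon]
  | insert a F ha ih =>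
    have : sqMon K (insert a F) = X a * sqMon K F := Finset.prod_insert ha
    rw [this, mul_left_comm, X_mul_mem_sqIdeal_iff hN,
      ih fun F G h => hN _ _ (Finset.insert_subset_insert a h)]
    simp only [Finset.union_insert]

theorem isWeaklyRegular_quotient_sqIdeal_of_split (hN : ∀ F G, F ⊆ G → N F → N G) (v : σ)
    {rs : List (MvPolynomial σ K)}
    (h₁ : IsWeaklyRegular (MvPolynomial σ K ⧸ sqIdeal K fun F => N (insert v F)) rs)
    (h₃ : IsWeaklyRegular (MvPolynomial σ K ⧸ sqIdeal K fun F => N F ∨ v ∈ F) rs) :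
    IsWeaklyRegular (MvPolynomial σ K ⧸ sqIdeal K N) rs := by
  have hle : sqIdeal K N ≤ sqIdeal K fun F => N F ∨ v ∈ F :=
    Ideal.span_mono (Set.image_mono fun F hF => Or.inl hF)
  have hcomap : (sqIdeal K fun F => N (insert v F)) =
      Submodule.comap (LinearMap.mulLeft (MvPolynomial σ K) (X v)) (sqIdeal K N) := by
    ext p
    exact (X_mul_mem_sqIdeal_iff hN v p).symm
  refine isWeaklyRegular_of_exact
    (f := Submodule.mapQ _ (sqIdeal K N) (LinearMap.mulLeft _ (X v)) hcomap.le)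
    (g := Submodule.factor hle) ?_ ?_ (Submodule.factor_surjective hle) h₁ h₃
  · rw [← LinearMap.ker_eq_bot, Submodule.mapQ, Submodule.ker_liftQ_eq_bot]
    rw [LinearMap.ker_comp, Submodule.ker_mkQ, hcomap]
  · intro z
    obtain ⟨p, rfl⟩ := Submodule.mkQ_surjective _ z
    constructor
    · intro hp
      have hp' : p ∈ sqIdeal K fun F => N F ∨ v ∈ F :=
        Ideal.Quotient.eq_zero_iff_mem.mp hp
      obtain ⟨j, hj, y, hy, rfl⟩ := Submodule.mem_sup.mp (sqIdeal_le_sup_span v hp')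
      obtain ⟨q, rfl⟩ := Ideal.mem_span_singleton.mp hy
      refine ⟨Submodule.Quotient.mk q, ?_⟩
      refine (Submodule.Quotient.eq _).mpr ?_
      simpa using hj
    · rintro ⟨q, hq⟩
      obtain ⟨q, rfl⟩ := Submodule.mkQ_surjective _ q
      rw [← hq]
      refine Ideal.Quotient.eq_zero_iff_mem.mpr ((X_mul_mem_sqIdeal_iff ?_ v q).mpr ?_)
      · exact fun F G h => Or.imp (hN F G h) (@h v)
      · rw [sqIdeal_eq_top (Or.inr (Finset.mem_insert_self v ∅))]
        trivial

end SqIdeal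

section CoordinatePrime

variable (K : Type) [Field K] {σ : Type} [DecidableEq σ]

omit [DecidableEq σ] in
theorem killCompl_X_of_notMem {τ : Type} {f : τ → σ} (hf : Injective f) {i : σ}
    (hi : i ∉ Set.range f) : killCompl hf (X i : MvPolynomial σ K) = 0 := by
  rw [killCompl, aeval_X, dif_neg hi]

/-- The squarefree ideal of a coordinate subspace is the kernel of killing the coordinates. -/
theorem ker_killCompl {r : ℕ} {f : Fin r → σ} (hf : Injective f) {C : Finset σ}
    (hC : ∀ i, i ∈ C ↔ i ∉ Set.range f) :
    RingHom.ker (killCompl (R := K) hf) = sqIdeal K fun F => ∃ c ∈ C, c ∈ F := by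
  apply le_antisymm
  · intro p hp
    have h : ((Ideal.Quotient.mkₐ K (sqIdeal K fun F => ∃ c ∈ C, c ∈ F)).comp (rename f)).comp
        (killCompl hf) = Ideal.Quotient.mkₐ K _ := by
      ext i
      by_cases hi : i ∈ Set.range f
      · obtain ⟨j, rfl⟩ := hi
        have : killCompl hf (X (f j) : MvPolynomial σ K) = X j := by
          rw [← rename_X, killCompl_rename_app]
        simp [this]
      · have hX : (X i : MvPolynomial σ K) ∈ sqIdeal K fun F => ∃ c ∈ C, c ∈ F := by
          have := sqMon_mem_sqIdeal (K := K) (N := fun F => ∃ c ∈ C, c ∈ F) (F := {i})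
            ⟨i, (hC i).mpr hi, by simp⟩
          simpa [sqMon] using this
        rw [AlgHom.comp_apply, killCompl_X_of_notMem K hf hi, map_zero]
        exact (Ideal.Quotient.eq_zero_iff_mem.mpr hX).symm
    have h' := DFunLike.congr_fun h p
    rw [AlgHom.comp_apply, (RingHom.mem_ker).mp hp, map_zero] at h'
    exact Ideal.Quotient.eq_zero_iff_mem.mp h'.symm
  · rw [sqIdeal, Ideal.span_le]
    rintro _ ⟨F, ⟨c, hc, hcF⟩, rfl⟩
    change killCompl hf (sqMon K F) = 0
    rw [sqMon, map_prod]
    exact Finset.prod_eq_zero hcF (killCompl_X_of_notMem K hf ((hC c).mp hc))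

variable [Fintype σ]

/-- The elements outside `C`, as a list. -/
noncomputable def complList (C : Finset σ) : List σ := Finset.univ.toList.filter (· ∉ C)

theorem nodup_complList (C : Finset σ) : (complList C).Nodup :=
  (Finset.nodup_toList _).filter _

theorem injective_complList_get (C : Finset σ) : Injective (complList C).get :=
  List.nodup_iff_injective_get.mp (nodup_complList C)

theorem mem_iff_notMem_range_complList_get (C : Finset σ) (i : σ) :
    i ∈ C ↔ i ∉ Set.range (complList C).get := by
  rw [Set.range_list_get]
  simp [complList]

theorem length_complList_add (C : Finset σ) :
    (complList C).length + C.card = Fintype.card σ := by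
  have h : (complList C).toFinset = Cᶜ := by
    ext i
    simp [complList]
  have h1 : (complList C).length = Cᶜ.card := by
    rw [← h, List.toFinset_card_of_nodup (nodup_complList C)]
  rw [h1, Finset.card_compl_add_card]

/-- The coordinate ring of a coordinate subspace is a polynomial ring. -/
noncomputable def quotientEquiv (C : Finset σ) :
    (MvPolynomial σ K ⧸ sqIdeal K fun F => ∃ c ∈ C, c ∈ F) ≃+*
      MvPolynomial (Fin (complList C).length) K :=
  (Ideal.quotEquivOfEq (ker_killCompl K (injective_complList_get C)
    (mem_iff_notMem_range_complList_get C)).symm).trans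
    (RingHom.quotientKerEquivOfSurjective fun p =>
      ⟨rename _ p, killCompl_rename_app (injective_complList_get C) p⟩)

theorem isPrime_sqIdeal_meets (C : Finset σ) :
    (sqIdeal K fun F => ∃ c ∈ C, c ∈ F).IsPrime := by
  rw [← ker_killCompl K (injective_complList_get C) (mem_iff_notMem_range_complList_get C)]
  exact RingHom.ker_isPrime _

theorem ringKrullDim_quotient_sqIdeal_meets (C : Finset σ) :
    ringKrullDim (MvPolynomial σ K ⧸ sqIdeal K fun F => ∃ c ∈ C, c ∈ F) =
      (complList C).length := by
  rw [ringKrullDim_eq_of_ringEquiv (quotientEquiv K C), MvPolynomial.ringKrullDim_of_isNoetherianRing]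
  simp

variable (σ) in
/-- The complete homogeneous symmetric polynomials of degrees `1, …, t` in all the variables. -/
noncomputable def universalSeq (t : ℕ) : List (MvPolynomial σ K) :=
  (List.range' 1 t).map (completeHomog (Finset.univ.toList.map X))

theorem isWeaklyRegular_universalSeq_meets (C : Finset σ) {t : ℕ}
    (ht : t + C.card ≤ Fintype.card σ) :
    IsWeaklyRegular (MvPolynomial σ K ⧸ sqIdeal K fun F => ∃ c ∈ C, c ∈ F)
      (universalSeq K σ t) := by
  have hl := length_complList_add C
  have h := isWeaklyRegular_completeHomog_fin (K := K) (complList C).length 1 t (by omega)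
  refine (AddEquiv.isWeaklyRegular_congr
    (e := ((quotientEquiv K C : _ ≃+* _) : _ ≃+ _)) ?_).mpr h
  rw [universalSeq, List.forall₂_map_left_iff, List.forall₂_map_right_iff, List.forall₂_same]
  intro i _ x
  obtain ⟨x, rfl⟩ := Ideal.Quotient.mk_surjective x
  set φ := killCompl (R := K) (injective_complList_get C)
  have key : φ (completeHomog (Finset.univ.toList.map X) i) =
      completeHomog ((List.finRange (complList C).length).map X) i := by
    have h1 := map_completeHomog φ.toRingHom (Finset.univ.toList.map X) i
    refine h1.trans ?_
    rw [List.map_map, ← completeHomog_map_filter _ (· ∉ C)]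
    · congr 1
      change (complList C).map _ = _
      refine (congrArg (List.map _) (List.map_get_finRange (complList C)).symm).trans ?_
      rw [List.map_map]
      refine List.map_congr_left fun j _ => ?_
      change φ (X ((complList C).get j)) = X j
      rw [← rename_X, killCompl_rename_app]
    · intro a ha
      exact killCompl_X_of_notMem K _ ((mem_iff_notMem_range_complList_get C a).mp (not_not.mp ha))
  change φ (_ * x) = _ * φ x
  rw [map_mul, key]

end CoordinatePrime

theorem isWeaklyRegular_of_subsingleton {R : Type*} [CommRing R] (rs : List R) :
    ∀ {M : Type*} [AddCommGroup M] [Module R M] [Subsingleton M], IsWeaklyRegular M rs := by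
  induction rs with
  | nil => intros; simp
  | cons r rs ih =>
    intro M _ _ _
    exact .cons (fun _ _ _ => Subsingleton.elim _ _) ih

section Depth

variable {K : Type} [Field K] {σ : Type} [Fintype σ] [DecidableEq σ] {N : Finset σ → Prop}

/-- The squarefree ideal obtained from `N` by inverting the variables in `A` and killing those in
`C`. -/
noncomputable def branchIdeal (K : Type) [Field K] {σ : Type} [DecidableEq σ]
    (N : Finset σ → Prop) (A C : Finset σ) : Ideal (MvPolynomial σ K) :=
  sqIdeal K fun F => N (F ∪ A) ∨ ∃ c ∈ C, c ∈ F

omit [Fintype σ] in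
theorem isWeaklyRegular_branch (hN : ∀ F G, F ⊆ G → N F → N G) {A C : Finset σ} {v : σ}
    (hv : v ∉ C) {rs : List (MvPolynomial σ K)}
    (h₁ : IsWeaklyRegular (MvPolynomial σ K ⧸ branchIdeal K N (insert v A) C) rs)
    (h₂ : IsWeaklyRegular (MvPolynomial σ K ⧸ branchIdeal K N A (insert v C)) rs) :
    IsWeaklyRegular (MvPolynomial σ K ⧸ branchIdeal K N A C) rs := by
  refine isWeaklyRegular_quotient_sqIdeal_of_split (fun F G h => ?_) v ?_ ?_
  · exact Or.imp (hN _ _ (Finset.union_subset_union_left h))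
      fun ⟨c, hc, hcF⟩ => ⟨c, hc, h hcF⟩
  · have : (sqIdeal K fun F => N (insert v F ∪ A) ∨ ∃ c ∈ C, c ∈ insert v F) =
        branchIdeal K N (insert v A) C := by
      refine congrArg (sqIdeal K) (funext fun F => propext (or_congr ?_ ?_))
      · rw [Finset.insert_union, Finset.union_insert]
      · refine exists_congr fun c => and_congr_right fun hc => ?_
        have : c ≠ v := fun h => hv (h ▸ hc)
        simp [this]
    rwa [this]
  · have : (sqIdeal K fun F => (N (F ∪ A) ∨ ∃ c ∈ C, c ∈ F) ∨ v ∈ F) =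
        branchIdeal K N A (insert v C) := by
      refine congrArg (sqIdeal K) (funext fun F => propext ?_)
      rw [Finset.exists_mem_insert, or_assoc, or_comm (a := v ∈ F)]
    rwa [this]

theorem isWeaklyRegular_branchIdeal_of_card (hN : ∀ F G, F ⊆ G → N F → N G) {t : ℕ}
    (A C : Finset σ) (hAC : Disjoint A C) (ht : t + C.card ≤ Fintype.card σ)
    (h : ∀ F, A ⊆ F → Disjoint F C → N F → t + 1 ≤ F.card) :
    IsWeaklyRegular (MvPolynomial σ K ⧸ branchIdeal K N A C) (universalSeq K σ t) := by
  induction hd : (A ∪ C)ᶜ.card using Nat.strong_induction_on generalizing A C with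
  | _ d ih
  by_cases hF : ∃ F, A ⊆ F ∧ Disjoint F C ∧ N F
  · obtain ⟨F, hAF, hFC, hNF⟩ := hF
    by_cases hA : N A
    · have : branchIdeal K N A C = ⊤ := sqIdeal_eq_top (Or.inl (by simpa using hA))
      rw [this]
      exact isWeaklyRegular_of_subsingleton _
    · obtain ⟨v, hvF, hvA⟩ := Finset.not_subset.mp fun hFA => hA (hN _ _ hFA hNF)
      have hvC : v ∉ C := Finset.disjoint_left.mp hFC hvF
      have hlt : (insert v (A ∪ C))ᶜ.card < d :=
        hd ▸ Finset.card_lt_card (Finset.compl_ssubset_compl.mpr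
          (Finset.ssubset_insert (by simp [hvA, hvC])))
      refine isWeaklyRegular_branch hN hvC
        (ih _ ?_ _ _ ?_ ht (fun G hG => h G ((Finset.subset_insert _ _).trans hG)) rfl)
        (ih _ ?_ _ _ ?_ ?_
          (fun G hG hGC => h G hG (hGC.mono_right (Finset.subset_insert _ _))) rfl)
      · rwa [Finset.insert_union]
      · simp [hAC, hvC]
      · rwa [Finset.union_insert]
      · simp [hAC, hvA]
      · have h1 := h F hAF hFC hNF
        have h2 := Finset.card_le_univ (F ∪ C)
        rw [Finset.card_union_of_disjoint hFC] at h2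
        rw [Finset.card_insert_of_notMem hvC]
        omega
  · have : branchIdeal K N A C = sqIdeal K fun F => ∃ c ∈ C, c ∈ F := by
      refine congrArg (sqIdeal K) (funext fun F => propext (or_iff_right_of_imp fun hNF => ?_))
      by_contra hFC
      refine hF ⟨F ∪ A, Finset.subset_union_right, Finset.disjoint_union_left.mpr ⟨?_, hAC⟩, hNF⟩
      exact Finset.disjoint_left.mpr fun c hcF hc => hFC ⟨c, hc, hcF⟩
    rw [this]
    exact isWeaklyRegular_universalSeq_meets K C ht

omit [Fintype σ] in
theorem isWeaklyRegular_branchIdeal_of_forall (hN : ∀ F G, F ⊆ G → N F → N G) 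
    {rs : List (MvPolynomial σ K)} (Y A C : Finset σ) (hAC : Disjoint A C)
    (h : ∀ A' C', Disjoint A' C' → A' ∪ C' = A ∪ C ∪ Y →
      IsWeaklyRegular (MvPolynomial σ K ⧸ branchIdeal K N A' C') rs) :
    IsWeaklyRegular (MvPolynomial σ K ⧸ branchIdeal K N A C) rs := by
  induction Y using Finset.induction_on generalizing A C with
  | empty => exact h A C hAC (by simp)
  | insert v Y hv ih =>
    by_cases hvA : v ∈ A ∪ C
    · exact ih A C hAC fun A' C' hd he => h A' C' hd (by
        rw [he, Finset.union_insert, Finset.insert_eq_of_mem (Finset.mem_union_left _ hvA)])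
    · rw [Finset.mem_union, not_or] at hvA
      refine isWeaklyRegular_branch hN hvA.2 (ih _ _ ?_ fun A' C' hd he => h A' C' hd ?_)
        (ih _ _ ?_ fun A' C' hd he => h A' C' hd ?_)
      · simp [hAC, hvA.2]
      · rw [he]; ext; simp
      · simp [hAC, hvA.1]
      · rw [he]; ext; simp

theorem isWeaklyRegular_quotient_sqIdeal (hN : ∀ F G, F ⊆ G → N F → N G) {t : ℕ}
    {Y W : Finset σ} (hY : ∀ F, N F → ¬ Y ⊆ F → t + 1 ≤ F.card)
    (hW : ∀ F, Y ⊆ F → N (F ∪ W) → N F) (hYW : ∀ F, Y ∪ W ⊆ F → N F → t + 1 ≤ F.card)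
    (ht : t + Y.card ≤ Fintype.card σ) :
    IsWeaklyRegular (MvPolynomial σ K ⧸ sqIdeal K N) (universalSeq K σ t) := by
  have h0 : sqIdeal K N = branchIdeal K N ∅ ∅ := by simp [branchIdeal]
  rw [h0]
  refine isWeaklyRegular_branchIdeal_of_forall hN Y ∅ ∅ (by simp) fun A C hAC he => ?_
  simp only [Finset.union_empty, Finset.empty_union] at he
  have hCY : C ⊆ Y := he ▸ Finset.subset_union_right
  obtain rfl | ⟨c, hc⟩ := C.eq_empty_or_nonempty
  · rw [Finset.union_empty] at he
    subst he
    have : branchIdeal K N A ∅ = branchIdeal K N (A ∪ W) ∅ := by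
      refine congrArg (sqIdeal K) (funext fun F => propext (or_congr_left ⟨?_, ?_⟩))
      · exact hN _ _ (by rw [← Finset.union_assoc]; exact Finset.subset_union_left)
      · rw [← Finset.union_assoc]
        exact hW _ Finset.subset_union_right
    rw [this]
    exact isWeaklyRegular_branchIdeal_of_card hN _ _ (by simp) (by simp; omega)
      fun F hF _ => hYW F hF
  · refine isWeaklyRegular_branchIdeal_of_card hN _ _ hAC ?_ fun F _ hFC hF => hY F hF fun h => ?_
    · have := Finset.card_le_card hCY
      omega
    · exact Finset.disjoint_left.mp hFC (h (hCY hc)) hc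

end Depth

section PolyDepth

variable {K : Type} [Field K] {σ : Type} [Fintype σ] [DecidableEq σ] {N : Finset σ → Prop}

omit [DecidableEq σ] in
theorem span_range_X_eq_sqIdeal :
    Ideal.span (Set.range (X : σ → MvPolynomial σ K)) =
      sqIdeal K fun F => ∃ c ∈ Finset.univ, c ∈ F := by
  apply le_antisymm
  · rw [Ideal.span_le]
    rintro _ ⟨i, rfl⟩
    have := sqMon_mem_sqIdeal (K := K) (N := fun F : Finset σ => ∃ c ∈ Finset.univ, c ∈ F)
      (F := {i}) ⟨i, by simp, by simp⟩
    simpa [sqMon] using this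
  · rw [sqIdeal, Ideal.span_le]
    rintro _ ⟨F, ⟨c, -, hcF⟩, rfl⟩
    exact Ideal.mem_of_dvd _ (Finset.dvd_prod_of_mem _ hcF) (Ideal.subset_span ⟨c, rfl⟩)

theorem length_le_card_of_isWeaklyRegular (hN : ∀ F G, F ⊆ G → N F → N G) {F : Finset σ}
    (hF : ¬ N F) (hF' : ∀ x ∉ F, N (insert x F)) {rs : List (MvPolynomial σ K)}
    (hrs : ∀ r ∈ rs, r ∈ Ideal.span (Set.range (X : σ → MvPolynomial σ K)))
    (h : IsWeaklyRegular (MvPolynomial σ K ⧸ sqIdeal K N) rs) : rs.length ≤ F.card := by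
  rw [span_range_X_eq_sqIdeal] at hrs
  have := isPrime_sqIdeal_meets K (Finset.univ : Finset σ)
  let P : PrimeSpectrum (MvPolynomial σ K) := ⟨_, isPrime_sqIdeal_meets K Fᶜ⟩
  have hP : P.asIdeal = sqIdeal K fun G => N (G ∪ F) := by
    refine congrArg (sqIdeal K) (funext fun G => propext ⟨?_, fun hG => ?_⟩)
    · rintro ⟨c, hc, hcG⟩
      exact hN (insert c F) (G ∪ F) (Finset.insert_subset (Finset.mem_union_left _ hcG)
        Finset.subset_union_right) (hF' c (Finset.mem_compl.mp hc))
    · by_contra hGF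
      have hGF' : G ∪ F = F := Finset.union_eq_right.mpr fun c hc => by
        by_contra hcF
        exact hGF ⟨c, Finset.mem_compl.mpr hcF, hc⟩
      exact hF (hGF' ▸ hG)
  have h1 := length_le_coheight_of_isWeaklyRegular hrs P
    (Ideal.span_mono (Set.image_mono fun G ⟨c, _, hc⟩ => ⟨c, Finset.mem_univ c, hc⟩))
    (Ideal.Quotient.mk (sqIdeal K N) (sqMon K F)) (fun r => ?_) h
  · have h2 : (Order.coheight P : WithBot ℕ∞) = (complList Fᶜ).length := by
      rw [Order.coheight_eq_krullDim_Ici, ← ringKrullDim_quotient_sqIdeal_meets K Fᶜ,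
        ringKrullDim_quotient]
      rfl
    have h3 := length_complList_add Fᶜ
    rw [Finset.card_compl] at h3
    have h4 := Finset.card_le_univ F
    have h5 : (rs.length : WithBot ℕ∞) ≤ (complList Fᶜ).length := h2 ▸ by exact_mod_cast h1
    have h6 : rs.length ≤ (complList Fᶜ).length := by exact_mod_cast h5
    omega
  · rw [hP, ← mul_sqMon_mem_sqIdeal_iff hN, ← Ideal.Quotient.eq_zero_iff_mem, map_mul]
    rfl

theorem isRegular_of_isWeaklyRegular (hN : ¬ N ∅) {rs : List (MvPolynomial σ K)}
    (hrs : ∀ r ∈ rs, r ∈ Ideal.span (Set.range (X : σ → MvPolynomial σ K)))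
    (h : IsWeaklyRegular (MvPolynomial σ K ⧸ sqIdeal K N) rs) :
    IsRegular (MvPolynomial σ K ⧸ sqIdeal K N) rs := by
  refine ⟨h, fun htop => ?_⟩
  rw [span_range_X_eq_sqIdeal] at hrs
  set 𝔪 := sqIdeal K fun F : Finset σ => ∃ c ∈ Finset.univ, c ∈ F
  have hle : sqIdeal K N ≤ 𝔪 := Ideal.span_mono (Set.image_mono fun F hF => by
    obtain ⟨c, hc⟩ := Finset.nonempty_iff_ne_empty.mpr fun h => hN (h ▸ hF)
    exact ⟨c, Finset.mem_univ c, hc⟩)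
  have hker : Ideal.ofList rs • (⊤ : Submodule _ (MvPolynomial σ K ⧸ sqIdeal K N)) ≤
      LinearMap.ker (Submodule.factor hle) := by
    rw [Submodule.smul_le]
    intro r hr z _
    have hr' : r ∈ 𝔪 := (Ideal.span_le.mpr hrs : Ideal.ofList rs ≤ 𝔪) hr
    obtain ⟨z, rfl⟩ := Submodule.mkQ_surjective _ z
    exact Ideal.Quotient.eq_zero_iff_mem.mpr (𝔪.mul_mem_right z hr')
  have h1 : Submodule.mkQ (sqIdeal K N) 1 ∈ LinearMap.ker (Submodule.factor hle) :=
    hker (htop ▸ Submodule.mem_top)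
  exact (isPrime_sqIdeal_meets K (Finset.univ : Finset σ)).ne_top
    ((Ideal.eq_top_iff_one _).mpr (Ideal.Quotient.eq_zero_iff_mem.mp h1))

omit [DecidableEq σ] in
theorem mem_span_range_X_of_mem_universalSeq {t : ℕ} {r : MvPolynomial σ K}
    (hr : r ∈ universalSeq K σ t) : r ∈ Ideal.span (Set.range (X : σ → MvPolynomial σ K)) := by
  obtain ⟨i, hi, rfl⟩ := List.mem_map.mp hr
  obtain ⟨j, rfl⟩ := Nat.exists_eq_add_of_le' (List.mem_range'_1.mp hi).1
  refine completeHomog_mem (fun x hx => ?_) j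
  obtain ⟨i, -, rfl⟩ := List.mem_map.mp hx
  exact Ideal.subset_span ⟨i, rfl⟩

theorem polyDepth_sqIdeal (hN : ∀ F G, F ⊆ G → N F → N G) {Y W F : Finset σ}
    (hF : ¬ N F) (hF' : ∀ x ∉ F, N (insert x F))
    (hY : ∀ G, N G → ¬ Y ⊆ G → F.card + 1 ≤ G.card)
    (hW : ∀ G, Y ⊆ G → N (G ∪ W) → N G) (hYW : ∀ G, Y ∪ W ⊆ G → N G → F.card + 1 ≤ G.card)
    (ht : F.card + Y.card ≤ Fintype.card σ) :
    polyDepth K (sqIdeal K N) = F.card := by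
  refine IsGreatest.csSup_eq ⟨⟨universalSeq K σ F.card, by simp [universalSeq],
    fun r hr => mem_span_range_X_of_mem_universalSeq hr, ?_⟩, ?_⟩
  · exact isRegular_of_isWeaklyRegular (fun h => hF (hN _ _ (Finset.empty_subset _) h))
      (fun r hr => mem_span_range_X_of_mem_universalSeq hr)
      (isWeaklyRegular_quotient_sqIdeal hN hY hW hYW ht)
  · rintro _ ⟨rs, rfl, hrs, h⟩
    exact length_le_card_of_isWeaklyRegular hN hF hF' hrs h.toIsWeaklyRegular

end PolyDepth

section SquarefreePower

variable {K : Type} [Field K] {σ : Type} [DecidableEq σ] {𝒢 : Set (Finset σ)}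

/-- `F` contains `k` pairwise disjoint members of `𝒢`. -/
def ContainsMatching (𝒢 : Set (Finset σ)) (k : ℕ) (F : Finset σ) : Prop :=
  ∃ G : Fin k → Finset σ, (∀ i, G i ∈ 𝒢) ∧ Pairwise (Disjoint on G) ∧ ∀ i, G i ⊆ F

omit [DecidableEq σ] in
theorem ContainsMatching.mono {k : ℕ} {F F' : Finset σ} (h : F ⊆ F')
    (hF : ContainsMatching 𝒢 k F) : ContainsMatching 𝒢 k F' := by
  obtain ⟨G, hG, hd, hs⟩ := hF
  exact ⟨G, hG, hd, fun i => (hs i).trans h⟩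

omit [DecidableEq σ] in
theorem sqMon_dvd_sqMon {F F' : Finset σ} (h : F ⊆ F') : sqMon K F ∣ sqMon K F' :=
  Finset.prod_dvd_prod_of_subset _ _ _ h

theorem sqMon_mem_span_pow_iff (k : ℕ) (F : Finset σ) :
    sqMon K F ∈ Ideal.span (sqMon K '' 𝒢) ^ k ↔ ContainsMatching 𝒢 k F := by
  classical
  constructor
  · intro h
    have h1 : Ideal.span (sqMon K '' 𝒢) ^ k ≤ Ideal.span ((fun e => monomial e (1 : K)) ''
        {e | ∃ G : Fin k → Finset σ, (∀ i, G i ∈ 𝒢) ∧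
          e = ∑ i, ∑ j ∈ G i, Finsupp.single j 1}) := by
      rw [Ideal.span, Submodule.span_pow]
      refine Submodule.span_mono fun p hp => ?_
      obtain ⟨f, hf, rfl⟩ := Set.mem_pow_iff_prod.mp hp
      choose G hG hGf using hf
      refine ⟨_, ⟨G, hG, rfl⟩, ?_⟩
      simp only [← hGf, sqMon_eq_monomial]
      rw [monomial_sum_one]
    have h2 := mem_ideal_span_monomial_image.mp (h1 h) (∑ j ∈ F, Finsupp.single j 1) (by
      rw [sqMon_eq_monomial, support_monomial, if_neg one_ne_zero]
      simp)
    obtain ⟨_, ⟨G, hG, rfl⟩, hle⟩ := h2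
    have hx : ∀ x, ∑ i, (if x ∈ G i then 1 else 0) ≤ if x ∈ F then 1 else 0 := fun x => by
      have h3 := hle x
      rw [sum_single_apply, Finsupp.finsetSum_apply] at h3
      simpa only [sum_single_apply] using h3
    refine ⟨G, hG, fun i i' hii => Finset.disjoint_left.mpr fun x hi hi' => ?_, fun i x hi => ?_⟩
    · have h3 := Finset.sum_le_sum_of_subset (f := fun i => if x ∈ G i then 1 else 0)
        (Finset.subset_univ {i, i'})
      rw [Finset.sum_pair hii, if_pos hi, if_pos hi'] at h3
      have h4 := hx x
      split_ifs at h4 <;> omega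
    · have h3 := Finset.single_le_sum (f := fun i => if x ∈ G i then 1 else 0)
        (fun _ _ => Nat.zero_le _) (Finset.mem_univ i)
      have h4 := hx x
      simp only [if_pos hi] at h3
      by_contra hF
      rw [if_neg hF] at h4
      omega
  · rintro ⟨G, hG, hd, hs⟩
    have h1 : ∏ i, sqMon K (G i) = sqMon K (Finset.univ.biUnion G) := by
      simp only [sqMon]
      rw [Finset.prod_biUnion fun i _ j _ h => hd h]
    have h3 : Finset.univ.biUnion G ⊆ F := Finset.biUnion_subset.mpr fun i _ => hs i
    refine Ideal.mem_of_dvd _ (sqMon_dvd_sqMon h3) ?_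
    rw [← h1]
    have h2 := Ideal.prod_mem_prod (s := Finset.univ) (I := fun _ : Fin k =>
      Ideal.span (sqMon K '' 𝒢)) (x := fun i => sqMon K (G i))
      fun i _ => Ideal.subset_span ⟨_, hG i, rfl⟩
    simpa using h2

theorem sqfreePower_span_eq_sqIdeal (k : ℕ) :
    sqfreePower K (Ideal.span (sqMon K '' 𝒢)) k = sqIdeal K (ContainsMatching 𝒢 k) := by
  refine congrArg Ideal.span (Set.ext fun p => ?_)
  constructor
  · rintro ⟨F, rfl, hF⟩
    exact ⟨F, (sqMon_mem_span_pow_iff k F).mp hF, rfl⟩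
  · rintro ⟨F, hF, rfl⟩
    exact ⟨F, rfl, (sqMon_mem_span_pow_iff k F).mpr hF⟩

end SquarefreePower

section Combinatorics

theorem exists_disjoint_subsets {σ : Type} [DecidableEq σ] (s : ℕ → ℕ) (k : ℕ) (S : Finset σ)
    (h : ∑ j ∈ Finset.range k, s j ≤ S.card) :
    ∃ T : ℕ → Finset σ, (∀ j < k, T j ⊆ S ∧ (T j).card = s j) ∧
      ∀ i < k, ∀ j < k, i ≠ j → Disjoint (T i) (T j) := by
  induction k generalizing S with
  | zero => exact ⟨fun _ => ∅, by simp, by simp⟩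
  | succ k ih =>
    rw [Finset.sum_range_succ] at h
    obtain ⟨U, hU, hUc⟩ := Finset.exists_subset_card_eq (s := S) (n := s k) (by omega)
    have := Finset.card_sdiff_add_card_eq_card hU
    obtain ⟨T, hT, hd⟩ := ih (S \ U) (by omega)
    have hTU : ∀ j < k, Disjoint (T j) U := fun j hj =>
      Finset.sdiff_disjoint.mono_left (hT j hj).1
    refine ⟨fun j => if j = k then U else T j, fun j hj => ?_, fun i hi j hj hij => ?_⟩
    · by_cases hjk : j = k
      · subst hjk
        simpa using ⟨hU, hUc⟩
      · simpa [hjk] using ⟨(hT j (by omega)).1.trans Finset.sdiff_subset, (hT j (by omega)).2⟩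
    · by_cases hik : i = k <;> by_cases hjk : j = k
      · omega
      · simpa [hik, hjk] using (hTU j (by omega)).symm
      · simpa [hik, hjk] using hTU i (by omega)
      · simpa [hik, hjk] using hd i (by omega) j (by omega) hij

theorem eq_range_or_sum_range_lt_sum (A : Finset ℕ) :
    A = Finset.range A.card ∨
      ∑ j ∈ Finset.range A.card, (j + 1) + 1 ≤ ∑ j ∈ A, (j + 1) := by
  set R := Finset.range A.card with hR
  refine or_iff_not_imp_left.mpr fun hne => ?_
  have hc : (A \ R).card = (R \ A).card := Finset.card_sdiff_comm (by simp [hR])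
  have hpos : 0 < (A \ R).card := by
    rw [Finset.card_pos, Finset.sdiff_nonempty]
    exact fun h => hne (Finset.eq_of_subset_of_card_le h (by simp [hR]))
  have h1 : (A \ R).card • (A.card + 1) ≤ ∑ j ∈ A \ R, (j + 1) :=
    Finset.card_nsmul_le_sum _ _ _ fun j hj => by simp [hR] at hj; omega
  have h2 : ∑ j ∈ R \ A, (j + 1) ≤ (R \ A).card • A.card :=
    Finset.sum_le_card_nsmul _ _ _ fun j hj => by simp [hR] at hj; omega
  have h3 := Finset.sum_inter_add_sum_sdiff A R (fun j => j + 1)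
  have h4 := Finset.sum_inter_add_sum_sdiff R A (fun j => j + 1)
  rw [Finset.inter_comm] at h4
  rw [← hc] at h2
  simp only [smul_eq_mul] at h1 h2
  nlinarith

end Combinatorics

section Construction

variable {σ : Type} [Fintype σ] [DecidableEq σ]

/-- The total weight of the first `k` colours, colour `j` having weight `b * (j + 1)`. -/
def weightSum (b k : ℕ) : ℕ := ∑ j ∈ Finset.range k, b * (j + 1)

/-- Data for the construction: distinct marked vertices `y j ∈ U` and pairwise disjoint
sets `V j` outside `U`, for `j < m`, where the weights are large compared to `Uᶜ` and
`U` is large compared to the weights. -/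
structure IsColouring (m b : ℕ) (U : Finset σ) (y : ℕ → σ) (V : ℕ → Finset σ) : Prop where
  y_mem : ∀ j < m, y j ∈ U
  y_inj : ∀ i < m, ∀ j < m, y i = y j → i = j
  V_disjoint_U : ∀ j < m, Disjoint (V j) U
  V_disjoint : ∀ i < m, ∀ j < m, i ≠ j → Disjoint (V i) (V j)
  card_compl_add_two_le : Uᶜ.card + 2 ≤ b
  large : Uᶜ.card + weightSum b m + m ≤ U.card

/-- The sets which contain `y j`, `V j` and at least `b * (j + 1)` elements of `U`
for some `j < m`. -/
def colouredSets {σ : Type} [DecidableEq σ] (m b : ℕ) (U : Finset σ) (y : ℕ → σ)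
    (V : ℕ → Finset σ) : Set (Finset σ) :=
  {G | ∃ j < m, y j ∈ G ∧ V j ⊆ G ∧ b * (j + 1) ≤ (G ∩ U).card}

theorem weightSum_mono (b : ℕ) {k l : ℕ} (h : k ≤ l) : weightSum b k ≤ weightSum b l :=
  Finset.sum_le_sum_of_subset (Finset.range_subset_range.mpr h)

theorem mul_le_weightSum (b k : ℕ) : b * k ≤ weightSum b k := by
  have := Finset.card_nsmul_le_sum (Finset.range k) (fun j => b * (j + 1)) b
    fun j _ => Nat.le_mul_of_pos_right b (Nat.succ_pos j)
  simpa [weightSum, mul_comm] using this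

variable {m b k : ℕ} {U : Finset σ} {y : ℕ → σ} {V : ℕ → Finset σ}

omit [Fintype σ] in
theorem weightSum_le_of_containsMatching {F : Finset σ}
    (hF : ContainsMatching (colouredSets m b U y V) k F) :
    k ≤ m ∧ ((∀ j < k, y j ∈ F ∧ V j ⊆ F) ∧ weightSum b k ≤ (F ∩ U).card ∨
      weightSum b k + b ≤ (F ∩ U).card) := by
  obtain ⟨G, hG, hd, hs⟩ := hF
  choose c hcm hcy hcV hcc using hG
  have hinj : Function.Injective c := fun i i' hii => by
    by_contra hne
    exact Finset.disjoint_left.mp (hd hne) (hcy i) (hii ▸ hcy i')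
  set A := Finset.univ.image c with hA
  have hAc : A.card = k := by simp [hA, Finset.card_image_of_injective _ hinj]
  have hAm : ∀ j ∈ A, j < m ∧ y j ∈ F ∧ V j ⊆ F := fun j hj => by
    obtain ⟨i, -, rfl⟩ := Finset.mem_image.mp hj
    exact ⟨hcm i, hs i (hcy i), (hcV i).trans (hs i)⟩
  have hsum : ∑ j ∈ A, b * (j + 1) ≤ (F ∩ U).card := by
    have h1 : (Finset.univ.biUnion fun i => G i ∩ U) ⊆ F ∩ U :=
      Finset.biUnion_subset.mpr fun i _ => Finset.inter_subset_inter_right (hs i)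
    refine le_trans ?_ (Finset.card_le_card h1)
    rw [Finset.card_biUnion fun i _ i' _ hii =>
      (hd hii).mono Finset.inter_subset_left Finset.inter_subset_left, hA,
      Finset.sum_image hinj.injOn]
    exact Finset.sum_le_sum fun i _ => hcc i
  refine ⟨?_, ?_⟩
  · have : A ⊆ Finset.range m := fun j hj => Finset.mem_range.mpr (hAm j hj).1
    simpa [hAc] using Finset.card_le_card this
  · rcases eq_range_or_sum_range_lt_sum A with hr | hlt
    · rw [hAc] at hr
      rw [hr] at hAm hsum
      exact Or.inl ⟨fun j hj => (hAm j (Finset.mem_range.mpr hj)).2, hsum⟩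
    · rw [← Finset.mul_sum] at hsum
      rw [hAc] at hlt
      rw [weightSum, ← Finset.mul_sum]
      exact Or.inr (by nlinarith)

namespace IsColouring

theorem card_image_y (h : IsColouring m b U y V) (hk : k ≤ m) :
    ((Finset.range k).image y).card = k := by
  rw [Finset.card_image_of_injOn, Finset.card_range]
  intro i hi j hj hij
  simp only [Finset.coe_range, Set.mem_Iio] at hi hj
  exact h.y_inj i (by omega) j (by omega) hij

theorem image_y_subset (h : IsColouring m b U y V) (hk : k ≤ m) :
    (Finset.range k).image y ⊆ U := fun x hx => by
  obtain ⟨j, hj, rfl⟩ := Finset.mem_image.mp hx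
  exact h.y_mem j (by simp at hj; omega)

theorem containsMatching (h : IsColouring m b U y V) (hk : k ≤ m) {F : Finset σ}
    (hF : ∀ j < k, y j ∈ F ∧ V j ⊆ F) (hc : weightSum b k ≤ (F ∩ U).card) :
    ContainsMatching (colouredSets m b U y V) k F := by
  have hb := h.card_compl_add_two_le
  have hsub : (Finset.range k).image y ⊆ F ∩ U :=
    Finset.subset_inter (fun x hx => by
      obtain ⟨j, hj, rfl⟩ := Finset.mem_image.mp hx
      exact (hF j (Finset.mem_range.mp hj)).1) (h.image_y_subset hk)
  obtain ⟨T, hT, hd⟩ := exists_disjoint_subsets (fun j => b * (j + 1) - 1) k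
    ((F ∩ U) \ (Finset.range k).image y) (by
      rw [Finset.card_sdiff_of_subset hsub, h.card_image_y hk]
      have : ∑ j ∈ Finset.range k, (b * (j + 1) - 1) + k = weightSum b k := by
        have h1 : ∑ j ∈ Finset.range k, 1 = k := by simp
        nth_rewrite 2 [← h1]
        rw [← Finset.sum_add_distrib]
        exact Finset.sum_congr rfl fun j _ => Nat.sub_add_cancel
          (Nat.mul_pos (by omega) (Nat.succ_pos j))
      omega)
  have hTU : ∀ j < k, ∀ x ∈ T j, x ∈ F ∧ x ∈ U ∧ ∀ i < k, y i ≠ x := fun j hj x hx => by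
    simpa [and_assoc] using (hT j hj).1 hx
  have hVU : ∀ j < k, ∀ x ∈ V j, x ∉ U := fun j hj x hx =>
    Finset.disjoint_left.mp (h.V_disjoint_U j (by omega)) hx
  refine ⟨fun j => insert (y j) (T j ∪ V j), fun j => ⟨j, by omega, by simp, ?_, ?_⟩, ?_, ?_⟩
  · exact Finset.subset_union_right.trans (Finset.subset_insert _ _)
  · have h1 : insert (y j) (T j) ⊆ insert (y j) (T j ∪ V j) ∩ U := by
      intro x hx
      simp only [Finset.mem_insert, Finset.mem_inter, Finset.mem_union] at hx ⊢
      rcases hx with rfl | hx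
      · exact ⟨Or.inl rfl, h.y_mem j (by omega)⟩
      · exact ⟨Or.inr (Or.inl hx), (hTU j j.2 x hx).2.1⟩
    have h2 := Finset.card_le_card h1
    rw [Finset.card_insert_of_notMem fun hx => (hTU j j.2 _ hx).2.2 j j.2 rfl,
      (hT j j.2).2] at h2
    exact le_trans (by omega) h2
  · intro i j hij
    have hij' : (i : ℕ) ≠ j := fun he => hij (Fin.ext he)
    refine Finset.disjoint_left.mpr fun x hx hx' => ?_
    simp only [Finset.mem_insert, Finset.mem_union] at hx hx'
    rcases hx with rfl | hx | hx <;> rcases hx' with he | hx' | hx'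
    · exact hij' (h.y_inj i (by omega) j (by omega) he)
    · exact (hTU j j.2 _ hx').2.2 i i.2 rfl
    · exact hVU j j.2 _ hx' (h.y_mem i (by omega))
    · exact (hTU i i.2 _ hx).2.2 j j.2 he.symm
    · exact Finset.disjoint_left.mp (hd i i.2 j j.2 hij') hx hx'
    · exact hVU j j.2 _ hx' (hTU i i.2 _ hx).2.1
    · exact hVU i i.2 _ hx (he ▸ h.y_mem j (by omega))
    · exact hVU i i.2 _ hx (hTU j j.2 _ hx').2.1
    · exact Finset.disjoint_left.mp (h.V_disjoint i (by omega) j (by omega) hij') hx hx'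
  · intro j
    refine Finset.insert_subset (hF j j.2).1 (Finset.union_subset (fun x hx => ?_) (hF j j.2).2)
    exact (hTU j j.2 x hx).1

theorem containsMatching_univ (h : IsColouring m b U y V) (hk : k ≤ m) :
    ContainsMatching (colouredSets m b U y V) k Finset.univ := by
  refine h.containsMatching hk (by simp) ?_
  have := h.large
  have := weightSum_mono b hk
  rw [Finset.univ_inter]
  omega

theorem card_biUnion_V (h : IsColouring m b U y V) (hk : k ≤ m) :
    ((Finset.range k).biUnion V).card = ∑ j ∈ Finset.range k, (V j).card :=
  Finset.card_biUnion fun i hi j hj hij => by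
    simp only [Finset.mem_coe, Finset.mem_range] at hi hj
    exact h.V_disjoint i (by omega) j (by omega) hij

theorem biUnion_V_subset (h : IsColouring m b U y V) (hk : k ≤ m) :
    (Finset.range k).biUnion V ⊆ Uᶜ := by
  rw [Finset.biUnion_subset]
  intro j hj x hx
  rw [Finset.mem_range] at hj
  exact Finset.mem_compl.mpr (Finset.disjoint_left.mp (h.V_disjoint_U j (by omega)) hx)

variable {K : Type} [Field K]

theorem monGrade_eq (h : IsColouring m b U y V) :
    monGrade K (Ideal.span (sqMon K '' colouredSets m b U y V)) = m := by
  refine IsGreatest.csSup_eq ⟨?_, fun k hk => ?_⟩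
  · rw [Set.mem_ofPred_eq, sqfreePower_span_eq_sqIdeal]
    intro h0
    have h1 := sqMon_mem_sqIdeal (K := K) (h.containsMatching_univ le_rfl)
    rw [h0, Ideal.mem_bot, sqMon, Finset.prod_eq_zero_iff] at h1
    obtain ⟨i, -, hi⟩ := h1
    exact X_ne_zero i hi
  · rw [Set.mem_ofPred_eq, sqfreePower_span_eq_sqIdeal] at hk
    by_contra hkm
    refine hk ?_
    rw [sqIdeal, Ideal.span_eq_bot]
    rintro _ ⟨F, hF, rfl⟩
    exact absurd (weightSum_le_of_containsMatching hF).1 hkm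

theorem indeg_eq (h : IsColouring m b U y V) (hk : k ≤ m) (hk1 : 1 ≤ k) :
    indeg K (sqIdeal K (ContainsMatching (colouredSets m b U y V) k)) =
      weightSum b k + ∑ j ∈ Finset.range k, (V j).card := by
  have hVc := h.card_biUnion_V hk
  have hVs := h.biUnion_V_subset hk
  have hVle := Finset.card_le_card hVs
  have hb := h.card_compl_add_two_le
  have hlarge := h.large
  have hQ := weightSum_mono b hk
  refine IsLeast.csInf_eq ⟨?_, ?_⟩
  · have hbk := mul_le_weightSum b k
    have h2k := Nat.mul_le_mul_right k (show 2 ≤ b by omega)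
    obtain ⟨P, hyP, hPU, hP⟩ := Finset.exists_subsuperset_card_eq (h.image_y_subset hk)
      (n := weightSum b k) (by rw [h.card_image_y hk]; omega) (by omega)
    refine ⟨P ∪ (Finset.range k).biUnion V, ?_, sqMon_mem_sqIdeal (h.containsMatching hk ?_ ?_)⟩
    · rw [Finset.card_union_of_disjoint, hP, hVc]
      exact Finset.disjoint_left.mpr fun x hx hx' => Finset.mem_compl.mp (hVs hx') (hPU hx)
    · intro j hj
      exact ⟨Finset.mem_union_left _ (hyP (Finset.mem_image_of_mem y (Finset.mem_range.mpr hj))),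
        (Finset.subset_biUnion_of_mem V (Finset.mem_range.mpr hj)).trans
          Finset.subset_union_right⟩
    · rw [← hP]
      exact Finset.card_le_card (Finset.subset_inter Finset.subset_union_left hPU)
  · rintro _ ⟨F, rfl, hF⟩
    rw [sqMon_mem_sqIdeal_iff fun _ _ => ContainsMatching.mono] at hF
    rw [← hVc]
    rcases (weightSum_le_of_containsMatching hF).2 with ⟨hF1, hF2⟩ | hF2
    · have h1 : (F ∩ U) ∪ (Finset.range k).biUnion V ⊆ F :=
        Finset.union_subset Finset.inter_subset_left (Finset.biUnion_subset.mpr fun j hj =>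
          (hF1 j (Finset.mem_range.mp hj)).2)
      have h2 := Finset.card_le_card h1
      rw [Finset.card_union_of_disjoint] at h2
      · omega
      · exact Finset.disjoint_left.mpr fun x hx hx' => Finset.mem_compl.mp (hVs hx')
          (Finset.mem_inter.mp hx).2
    · have h1 := Finset.card_le_card (Finset.inter_subset_left : F ∩ U ⊆ F)
      omega

theorem polyDepth_eq (h : IsColouring m b U y V) (hk : k ≤ m) (hk1 : 1 ≤ k) :
    polyDepth K (sqIdeal K (ContainsMatching (colouredSets m b U y V) k)) + 1 =
      Uᶜ.card + weightSum b k := by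
  have hVs := h.biUnion_V_subset hk
  have hVle := Finset.card_le_card hVs
  have hb := h.card_compl_add_two_le
  have hlarge := h.large
  have hQ := weightSum_mono b hk
  have hbk := mul_le_weightSum b k
  have h2k := Nat.mul_le_mul_right k (show 2 ≤ b by omega)
  obtain ⟨P, hyP, hPU, hP⟩ := Finset.exists_subsuperset_card_eq (h.image_y_subset hk)
    (n := weightSum b k - 1) (by rw [h.card_image_y hk]; omega) (by omega)
  have hPd : Disjoint Uᶜ P := Finset.disjoint_left.mpr fun x hx hx' =>
    Finset.mem_compl.mp hx (hPU hx')
  have hFc : (Uᶜ ∪ P).card + 1 = Uᶜ.card + weightSum b k := by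
    rw [Finset.card_union_of_disjoint hPd, hP]
    omega
  have hFU : (Uᶜ ∪ P) ∩ U = P := by
    rw [Finset.union_inter_distrib_right, Finset.inter_comm, Finset.inter_compl,
      Finset.empty_union, Finset.inter_eq_left.mpr hPU]
  have hyF : ∀ j < k, y j ∈ P := fun j hj =>
    hyP (Finset.mem_image_of_mem y (Finset.mem_range.mpr hj))
  have hVU : ∀ j < k, V j ⊆ Uᶜ := fun j hj =>
    (Finset.subset_biUnion_of_mem V (Finset.mem_range.mpr hj)).trans hVs
  rw [polyDepth_sqIdeal (fun _ _ => ContainsMatching.mono)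
    (Y := (Finset.range k).image y ∪ (Finset.range k).biUnion V) (W := Uᶜ) (F := Uᶜ ∪ P), hFc]
  · intro hF
    have h1 := (weightSum_le_of_containsMatching hF).2
    rw [hFU] at h1
    omega
  · intro x hx
    rw [Finset.mem_union, Finset.mem_compl] at hx
    push Not at hx
    refine h.containsMatching hk (fun j hj => ⟨?_, ?_⟩) ?_
    · exact Finset.mem_insert_of_mem (Finset.mem_union_right _ (hyF j hj))
    · exact ((hVU j hj).trans Finset.subset_union_left).trans (Finset.subset_insert _ _)
    · rw [Finset.insert_inter_of_mem hx.1, hFU, Finset.card_insert_of_notMem hx.2, hP]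
      omega
  · intro G hG hYG
    have h1 := Finset.card_le_card (Finset.inter_subset_left : G ∩ U ⊆ G)
    rcases (weightSum_le_of_containsMatching hG).2 with ⟨hG1, -⟩ | hG2
    · refine absurd (Finset.union_subset (fun x hx => ?_) (Finset.biUnion_subset.mpr
        fun j hj => (hG1 j (Finset.mem_range.mp hj)).2)) hYG
      obtain ⟨j, hj, rfl⟩ := Finset.mem_image.mp hx
      exact (hG1 j (Finset.mem_range.mp hj)).1
    · omega
  · intro G hYG hG
    have h1 : (G ∪ Uᶜ) ∩ U = G ∩ U := by
      rw [Finset.union_inter_distrib_right, Finset.inter_comm Uᶜ, Finset.inter_compl,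
        Finset.union_empty]
    have h2 := (weightSum_le_of_containsMatching hG).2
    rw [h1] at h2
    refine h.containsMatching hk (fun j hj => ⟨?_, ?_⟩) (by omega)
    · exact hYG (Finset.mem_union_left _ (Finset.mem_image_of_mem y (Finset.mem_range.mpr hj)))
    · exact ((Finset.subset_biUnion_of_mem V (Finset.mem_range.mpr hj)).trans
        Finset.subset_union_right).trans hYG
  · intro G hYG hG
    have h1 := (weightSum_le_of_containsMatching hG).2
    have h2 : Uᶜ ∪ (G ∩ U) ⊆ G := Finset.union_subset
      (Finset.subset_union_right.trans hYG) Finset.inter_subset_left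
    have h3 := Finset.card_le_card h2
    rw [Finset.card_union_of_disjoint (disjoint_compl_left.mono_right
      Finset.inter_subset_right)] at h3
    omega
  · have h1 := Finset.card_union_le ((Finset.range k).image y) ((Finset.range k).biUnion V)
    rw [h.card_image_y hk] at h1
    have h2 := Finset.card_add_card_compl U
    omega

theorem nDepth_eq (h : IsColouring m b U y V) (hk : k ≤ m) (hk1 : 1 ≤ k) :
    nDepth K (Ideal.span (sqMon K '' colouredSets m b U y V)) k =
      Uᶜ.card - ∑ j ∈ Finset.range k, ((V j).card : ℤ) := by
  have h1 := h.polyDepth_eq (K := K) hk hk1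
  rw [nDepth, sqfreePower_span_eq_sqIdeal, h.indeg_eq hk hk1]
  push_cast
  omega

end IsColouring

end Construction

section Interval

/-- The indices `i : Fin n` with `c ≤ i < d`. -/
def finIco (n c d : ℕ) : Finset (Fin n) := Finset.univ.filter fun i => c ≤ i.val ∧ i.val < d

theorem mem_finIco {n c d : ℕ} {i : Fin n} : i ∈ finIco n c d ↔ c ≤ i.val ∧ i.val < d := by
  simp [finIco]

theorem card_finIco {n c d : ℕ} (hd : d ≤ n) : (finIco n c d).card = d - c := by
  rw [← Nat.card_Ico, ← Finset.card_map Fin.valEmbedding]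
  congr 1
  ext i
  simp only [Finset.mem_map, mem_finIco, Fin.valEmbedding_apply, Finset.mem_Ico]
  exact ⟨fun ⟨j, hj, hji⟩ => hji ▸ hj, fun hi => ⟨⟨i, by omega⟩, hi, rfl⟩⟩

theorem isColouring_finIco {m b n : ℕ} {c : ℕ → ℕ} (hn : 0 < n)
    (hc : ∀ j < m, c (j + 1) ≤ c j) (hb : c 0 + 2 ≤ b)
    (hlarge : c 0 + (c 0 + weightSum b m + m) ≤ n) :
    IsColouring m b (finIco n (c 0) n) (fun j => ⟨(c 0 + j) % n, Nat.mod_lt _ hn⟩)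
      fun j => finIco n (c (j + 1)) (c j) := by
  have hanti : ∀ i j, i ≤ j → j ≤ m → c j ≤ c i := fun i j hij => by
    induction j, hij using Nat.le_induction with
    | base => exact fun _ => le_rfl
    | succ j _ ih => exact fun hj => (hc j (by omega)).trans (ih (by omega))
  have hmod : ∀ j < m, (c 0 + j) % n = c 0 + j := fun j hj => Nat.mod_eq_of_lt (by omega)
  have hU : (finIco n (c 0) n).card = n - c 0 := card_finIco le_rfl
  have hUc := Finset.card_add_card_compl (finIco n (c 0) n)
  rw [Fintype.card_fin] at hUc
  refine ⟨fun j hj => mem_finIco.mpr ?_, fun i hi j hj hij => ?_, fun j hj => ?_,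
    fun i hi j hj hij => ?_, by omega, by omega⟩
  · simp only [hmod j hj]
    omega
  · simp only [Fin.mk.injEq, hmod i hi, hmod j hj] at hij
    omega
  · refine Finset.disjoint_left.mpr fun x hx hx' => ?_
    rw [mem_finIco] at hx hx'
    have := hanti 0 j (Nat.zero_le j) hj.le
    omega
  · refine Finset.disjoint_left.mpr fun x hx hx' => ?_
    rw [mem_finIco] at hx hx'
    rcases lt_or_gt_of_ne hij with h | h
    · have := hanti (i + 1) j h hj.le
      omega
    · have := hanti (j + 1) i h hi.le
      omega

end Interval

/-- **Theorem 4.1.** Any non-increasing sequence `a₁ ≥ a₂ ≥ … ≥ a_m` of non-negative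
integers is the normalized depth function of some squarefree monomial ideal
`I ⊆ K[x₁,…,xₙ]` with `ν(I) = m`. -/
theorem any_nonincreasing_is_normalized_depth (K : Type) [Field K]
    (m : ℕ) (hm : 1 ≤ m) (a : ℕ → ℕ)
    (ha : ∀ k : ℕ, 1 ≤ k → k < m → a (k + 1) ≤ a k) :
    ∃ (n : ℕ) (I : Ideal (MvPolynomial (Fin n) K)),
      IsSqfreeMonomialIdeal K I ∧ monGrade K I = m ∧
      ∀ k : ℕ, 1 ≤ k → k ≤ m → nDepth K I k = (a k : ℤ) := by
  let c : ℕ → ℕ := fun j => if j = 0 then a 1 else a j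
  have hc : ∀ j < m, c (j + 1) ≤ c j := fun j hj => by
    rcases Nat.eq_zero_or_pos j with rfl | hj0
    · simp [c]
    · simpa [c, hj0.ne'] using ha j hj0 hj
  let b := c 0 + 2
  let n := c 0 + (c 0 + weightSum b m + m)
  have h := isColouring_finIco (n := n) (by omega) hc le_rfl le_rfl
  refine ⟨n, Ideal.span (sqMon K '' colouredSets _ _ _ _ _), ⟨_, rfl⟩, h.monGrade_eq,
    fun k hk1 hk => ?_⟩
  have htel : ∀ k ≤ m, ∑ j ∈ Finset.range k, ((finIco n (c (j + 1)) (c j)).card : ℤ) =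
      c 0 - c k := fun k hk => by
    have hle : ∀ j ≤ m, c j ≤ c 0 := fun j => by
      induction j with
      | zero => exact fun _ => le_rfl
      | succ j ih => exact fun hj => (hc j hj).trans (ih (by omega))
    rw [← Finset.sum_range_sub' (fun j => (c j : ℤ))]
    refine Finset.sum_congr rfl fun j hj => ?_
    rw [Finset.mem_range] at hj
    have := hle j (by omega)
    rw [card_finIco (by omega), Nat.cast_sub (hc j (by omega))]
  have hU : (finIco n (c 0) n).card = n - c 0 := card_finIco le_rfl
  have hUc := Finset.card_add_card_compl (finIco n (c 0) n)
  rw [Fintype.card_fin] at hUc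
  rw [h.nDepth_eq hk hk1, htel k hk]
  have hck : c k = a k := if_neg (by omega)
  omega
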